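/- For every τ ∈ H and every x ∈ ℝ, F(g_{−1/τ})(x) = −i · √(−iτ) · g_τ(x), where F(g)(x) := ∫_ℝ g(w) e(wx) dw and √(−iτ) denotes the principal branch of the square root. -/

import Mathlib

open Complex MeasureTheory
open scoped Classical

noncomputable section

/-- `e(a) = exp(2πia)`. -/
def e (a : ℂ) : ℂ := Complex.exp (2 * (Real.pi : ℂ) * Complex.I * a)

/-- The Fourier transform `F(g)(x) = ∫ g(w) e(wx) dw`. -/
def fourierT (g : ℝ → ℂ) (x : ℝ) : ℂ := ∫ w : ℝ, g w * e ((w * x : ℝ))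

/-- The operator `E_σ(f)(x) = e(x²σ/2) ∫_0^x e(-w²σ/2) f(w) dw`. -/
def Eop (σ : ℂ) (f : ℝ → ℂ) (x : ℝ) : ℂ :=
  e ((x : ℂ)^2 * σ / 2) * ∫ w in (0:ℝ)..x, e (-(w : ℂ)^2 * σ / 2) * f w

/-- `ω_τ(x) = e(-x²τ/2) ∑_{m ∈ ℤ+1/2, m ≥ |x|} e(m²τ/2 + m/2)`. -/
def omega (τ : ℂ) (x : ℝ) : ℂ :=
  e (-(x : ℂ)^2 * τ / 2) *
    ∑' m : ℤ, if |x| ≤ (m : ℝ) + 1/2 then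
      e (((m : ℂ) + 1/2)^2 / 2 * τ + ((m : ℂ) + 1/2) / 2) else 0

/-- `η³(τ) = -i ∑_{m ∈ ℤ+1/2} m e(m²τ/2 + m/2)`. -/
def eta3 (τ : ℂ) : ℂ :=
  -Complex.I * ∑' m : ℤ, ((m : ℂ) + 1/2) * e (((m : ℂ) + 1/2)^2 / 2 * τ + ((m : ℂ) + 1/2) / 2)

/-- The complementary error function. -/
def erfc (x : ℝ) : ℝ := (2 / Real.sqrt Real.pi) * ∫ t in Set.Ioi x, Real.exp (-t^2)

/-- `g⁺_τ`. -/
def gplus (τ : ℂ) (x : ℝ) : ℂ :=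
  e (-(x : ℂ)^2 * τ / 2) * ((Real.sign x : ℂ) / (Complex.I * eta3 τ)) *
    ∑' m : ℤ, if |x| < (m : ℝ) + 1/2 then
      (((m : ℝ) + 1/2 - |x| : ℝ) : ℂ) * e (((m : ℂ) + 1/2)^2 / 2 * τ + ((m : ℂ) + 1/2) / 2)
    else 0

/-- `g*_τ`. -/
def gstar (τ : ℂ) (x : ℝ) : ℂ :=
  e (-(x : ℂ)^2 * τ / 2) * ((Real.sign x : ℂ) / 2) *
    (erfc (Real.sqrt (2 * Real.pi * τ.im) * |x|) : ℂ)

/-- `g_τ = g⁺_τ - g*_τ`. -/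
def gfun (τ : ℂ) (x : ℝ) : ℂ := gplus τ x - gstar τ x

/-- The operator `ξ_k f = 2i v^k conj(∂f/∂τ̄)`, with `∂/∂τ̄ = (1/2)(∂/∂u + i ∂/∂v)`. -/
def xi (k : ℝ) (f : ℂ → ℂ) (τ : ℂ) : ℂ :=
  2 * Complex.I * ((τ.im ^ k : ℝ) : ℂ) *
    (starRingEnd ℂ) ((1/2 : ℂ) * (fderiv ℝ f τ 1 + Complex.I * fderiv ℝ f τ Complex.I))

/-- Sum of divisors function `σ₁`. -/
def sigma1 (n : ℕ) : ℕ := ∑ d ∈ Nat.divisors n, d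

/-- The weight 2 Eisenstein series `E₂`. -/
def E2 (τ : ℂ) : ℂ := 1 - 24 * ∑' n : ℕ, (sigma1 (n+1) : ℂ) * e ((n + 1 : ℂ) * τ)

/-- `ϑ̃_{N,h}`. -/
def tvtheta (N : ℕ) (h : ℝ) (τ : ℂ) : ℂ :=
  (if ∃ m : ℤ, h = (m : ℝ) + 1/2 then
      e ((h : ℂ) / 2) * E2 τ / (12 * (N : ℂ) * Complex.I * eta3 τ) else 0)
  + ∑' n : ℤ, gfun τ ((N : ℝ) * n + h)

/-- The Schwartz function `φ_τ(x,y) = √(2v)·x·e(x²τ/2 - y²τ̄/2)`. -/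
def Phi (τ : ℂ) (x y : ℝ) : ℂ :=
  (Real.sqrt (2 * τ.im) : ℂ) * (x : ℂ) *
    e ((x : ℂ)^2 * τ / 2 - (y : ℂ)^2 * (starRingEnd ℂ) τ / 2)

/-- The signature (1,1) bilinear form `B((a₁,a₂),(b₁,b₂)) = a₁b₂ + a₂b₁`. -/
def Bform (a b : ℝ × ℝ) : ℝ := a.1 * b.2 + a.2 * b.1

/-- `Z⁺_t = (t/√2, t⁻¹/√2)`. -/
def Zp (t : ℝ) : ℝ × ℝ := (t / Real.sqrt 2, t⁻¹ / Real.sqrt 2)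

/-- `Z⁻_t = (t/√2, -t⁻¹/√2)`. -/
def Zm (t : ℝ) : ℝ × ℝ := (t / Real.sqrt 2, -t⁻¹ / Real.sqrt 2)

end

/-!
Multiplying `g_τ(w)` by the Gaussian `e(w²τ/2)` cancels its prefactor, so the transform
`J_τ(z) = ∫ g_τ(w) e(w²τ/2 + wz) dw` can be computed term by term: with `ϑ` the odd Jacobi theta
function, whose derivative at `0` is proportional to `η³`,
`(2πiz)² J_τ(z) = ϑ(z) / (iη³(τ)) - 2πiz exp(-πz²/(2v))`.
The functional equation of `ϑ` makes the right-hand side transform simply under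
`(τ, z) ↦ (-1/τ, -z/τ)`. Since a Gaussian of parameter `τ` has a Gaussian of parameter `-1/τ` as
Fourier transform, Parseval's formula turns this into the equality of `∫ f(w) e(w²τ/2 + wz) dw` for
`f = F(g_{-1/τ})` and `f = -i√(-iτ) g_τ`, and Fourier inversion identifies the two functions.

The quotient by `η³(τ)` is harmless because `η³` never vanishes: its eighth power is a nonzero cusp
form of weight `12`, hence a nonzero multiple of the discriminant `Δ`.
-/

open Filter
open scoped Real Topology FourierTransform

section Exponential

theorem e_add (a b : ℂ) : e (a + b) = e a * e b := by
  simp only [e, mul_add, Complex.exp_add]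

theorem e_ne_zero (a : ℂ) : e a ≠ 0 := Complex.exp_ne_zero _

theorem e_neg_mul_e (a : ℂ) : e (-a) * e a = 1 := by
  rw [← e_add, neg_add_cancel, e, mul_zero, Complex.exp_zero]

theorem e_mul (w z : ℂ) : e (w * z) = cexp (2 * π * I * z * w) := by
  rw [e]; ring_nf

theorem e_intCast (m : ℤ) : e m = 1 := by
  rw [e, mul_comm, Complex.exp_int_mul_two_pi_mul_I]

theorem e_pow (a : ℂ) (n : ℕ) : e a ^ n = e (n * a) := by
  rw [e, e, ← Complex.exp_nat_mul]; ring_nf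

theorem e_one_div_four : e (1 / 4) = I := by
  rw [e, show 2 * (π : ℂ) * I * (1 / 4) = π / 2 * I by ring, Complex.exp_pi_div_two_mul_I]

theorem e_one_div_two : e (1 / 2) = -1 := by
  rw [e, show 2 * (π : ℂ) * I * (1 / 2) = π * I by ring, Complex.exp_pi_mul_I]

theorem norm_e (a : ℂ) : ‖e a‖ = Real.exp (-(2 * π * a.im)) := by
  rw [e, Complex.norm_exp]
  simp

theorem norm_e_ofReal (t : ℝ) : ‖e t‖ = 1 := by
  simp [norm_e]

@[fun_prop]
theorem continuous_e : Continuous e := by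
  unfold e; fun_prop

end Exponential

section HalfPlane

variable {τ : ℂ}

theorem ne_zero_of_im_pos (hτ : 0 < τ.im) : τ ≠ 0 := by
  rintro rfl
  exact lt_irrefl _ hτ

theorem im_neg_one_div_pos (hτ : 0 < τ.im) : 0 < (-1 / τ).im := by
  simpa [neg_div] using UpperHalfPlane.im_inv_neg_coe_pos ⟨τ, hτ⟩

theorem neg_I_mul_cpow_half_sq (τ : ℂ) : ((-I * τ) ^ (1 / 2 : ℂ)) ^ 2 = -I * τ := by
  rw [one_div]
  exact_mod_cast Complex.cpow_nat_inv_pow (-I * τ) two_ne_zero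

theorem neg_I_mul_cpow_half_ne_zero (hτ : τ ≠ 0) : (-I * τ) ^ (1 / 2 : ℂ) ≠ 0 :=
  Complex.cpow_ne_zero_iff.2 (.inl (mul_ne_zero (neg_ne_zero.2 I_ne_zero) hτ))

end HalfPlane

section OddTheta

variable {τ : ℂ}

/-- The coefficient `e(h²τ/2 + h/2)`, `h = m + 1/2`, of the odd theta series. -/
noncomputable def thetaCoeff (τ : ℂ) (m : ℤ) : ℂ :=
  e (((m : ℂ) + 1 / 2) ^ 2 / 2 * τ + ((m : ℂ) + 1 / 2) / 2)

/-- The odd Jacobi theta function `ϑ(z) = ∑_{m ∈ ℤ+1/2} e(m²τ/2 + m/2) e(mz)`. -/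
noncomputable def oddTheta (τ z : ℂ) : ℂ :=
  ∑' m : ℤ, thetaCoeff τ m * e (((m : ℂ) + 1 / 2) * z)

theorem thetaCoeff_mul_e (τ z : ℂ) (m : ℤ) :
    thetaCoeff τ m * e (((m : ℂ) + 1 / 2) * z) =
      e (τ / 8 + 1 / 4 + z / 2) * jacobiTheta₂_term m (z + 1 / 2 + τ / 2) τ := by
  rw [thetaCoeff, e, e, e, jacobiTheta₂_term, ← Complex.exp_add, ← Complex.exp_add]
  ring_nf

theorem thetaCoeff_eq_mul_jacobiTheta₂_term (τ : ℂ) (m : ℤ) :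
    thetaCoeff τ m = e (τ / 8 + 1 / 4) * jacobiTheta₂_term m (1 / 2 + τ / 2) τ := by
  simpa [e] using thetaCoeff_mul_e τ 0 m

theorem oddTheta_eq_mul_jacobiTheta₂ (τ z : ℂ) :
    oddTheta τ z = e (τ / 8 + 1 / 4 + z / 2) * jacobiTheta₂ (z + 1 / 2 + τ / 2) τ := by
  simp_rw [oddTheta, jacobiTheta₂, thetaCoeff_mul_e, tsum_mul_left]

theorem hasSum_oddTheta (hτ : 0 < τ.im) (z : ℂ) :
    HasSum (fun m : ℤ ↦ thetaCoeff τ m * e (((m : ℂ) + 1 / 2) * z)) (oddTheta τ z) := by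
  simp_rw [oddTheta_eq_mul_jacobiTheta₂, thetaCoeff_mul_e]
  exact (hasSum_jacobiTheta₂_term _ hτ).mul_left _

theorem hasSum_add_half_mul_thetaCoeff (hτ : 0 < τ.im) :
    HasSum (fun m : ℤ ↦ ((m : ℂ) + 1 / 2) * thetaCoeff τ m)
      (e (τ / 8 + 1 / 4) * ((2 * π * I)⁻¹ * jacobiTheta₂' (1 / 2 + τ / 2) τ
        + 1 / 2 * jacobiTheta₂ (1 / 2 + τ / 2) τ)) := by
  refine ((((hasSum_jacobiTheta₂'_term (1 / 2 + τ / 2) hτ).mul_left (2 * π * I)⁻¹).add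
    ((hasSum_jacobiTheta₂_term (1 / 2 + τ / 2) hτ).mul_left (1 / 2))).mul_left
      (e (τ / 8 + 1 / 4))).congr_fun fun m ↦ ?_
  rw [thetaCoeff_eq_mul_jacobiTheta₂_term, jacobiTheta₂'_term]
  field_simp [Complex.two_pi_I_ne_zero]

theorem eta3_eq_tsum (τ : ℂ) :
    eta3 τ = -I * ∑' m : ℤ, ((m : ℂ) + 1 / 2) * thetaCoeff τ m := rfl

theorem I_mul_eta3_eq_tsum (τ : ℂ) :
    I * eta3 τ = ∑' m : ℤ, ((m : ℂ) + 1 / 2) * thetaCoeff τ m := by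
  rw [eta3_eq_tsum, ← mul_assoc, mul_neg, I_mul_I, neg_neg, one_mul]

theorem hasSum_I_mul_eta3 (hτ : 0 < τ.im) :
    HasSum (fun m : ℤ ↦ ((m : ℂ) + 1 / 2) * thetaCoeff τ m) (I * eta3 τ) := by
  rw [I_mul_eta3_eq_tsum]
  exact (hasSum_add_half_mul_thetaCoeff hτ).summable.hasSum

theorem hasDerivAt_oddTheta_zero (hτ : 0 < τ.im) :
    HasDerivAt (oddTheta τ) (2 * π * I * (I * eta3 τ)) 0 := by
  have hshift : HasDerivAt (fun z : ℂ ↦ jacobiTheta₂ (z + (1 / 2 + τ / 2)) τ)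
      (jacobiTheta₂' (0 + (1 / 2 + τ / 2)) τ) 0 :=
    (hasDerivAt_jacobiTheta₂_fst _ hτ).comp_add_const 0 _
  have hexp : HasDerivAt (fun z : ℂ ↦ e (τ / 8 + 1 / 4 + z / 2))
      (e (τ / 8 + 1 / 4 + 0 / 2) * (2 * π * I * (1 / 2))) 0 :=
    ((((hasDerivAt_id (0 : ℂ)).div_const 2).const_add _).const_mul _).cexp
  rw [(hasSum_I_mul_eta3 hτ).unique (hasSum_add_half_mul_thetaCoeff hτ)]
  refine ((hexp.mul hshift).congr_deriv ?_).congr_of_eventuallyEq (.of_forall fun z ↦ ?_)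
  · simp only [zero_add, zero_div, add_zero]
    field_simp [Complex.two_pi_I_ne_zero]
    ring
  · simp only [oddTheta_eq_mul_jacobiTheta₂, Pi.mul_apply, add_assoc]

/- With `c = z + (1 + τ)/2`, the theta functional equation turns `c` into `c/τ`, which is the
negative of the corresponding point for `(-1/τ, -z/τ)` up to the period `1`. -/
theorem oddTheta_neg_one_div (hτ : τ ≠ 0) (z : ℂ) :
    oddTheta (-1 / τ) (-1 / τ * z) =
      I * (-I * τ) ^ (1 / 2 : ℂ) * e (z ^ 2 / (2 * τ)) * oddTheta τ z := by
  have hpoint : jacobiTheta₂ (-1 / τ * z + 1 / 2 + -1 / τ / 2) (-1 / τ) =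
      jacobiTheta₂ ((z + 1 / 2 + τ / 2) / τ) (-1 / τ) := by
    rw [← jacobiTheta₂_neg_left ((z + 1 / 2 + τ / 2) / τ),
      ← jacobiTheta₂_add_left (-((z + 1 / 2 + τ / 2) / τ))]
    congr 1
    field_simp
    ring
  have hexp : e (-1 / τ / 8 + 1 / 4 + -1 / τ * z / 2) =
      e (1 / 4) * e (z ^ 2 / (2 * τ)) * e (τ / 8 + 1 / 4 + z / 2) *
        cexp (-π * I * (z + 1 / 2 + τ / 2) ^ 2 / τ) := by
    simp only [e, ← Complex.exp_add]
    congr 1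
    field_simp
    ring
  rw [oddTheta_eq_mul_jacobiTheta₂, oddTheta_eq_mul_jacobiTheta₂, hpoint, hexp, e_one_div_four,
    jacobiTheta₂_functional_equation (z + 1 / 2 + τ / 2)]
  field_simp [neg_I_mul_cpow_half_ne_zero hτ]

theorem eta3_neg_one_div (hτ : 0 < τ.im) :
    eta3 (-1 / τ) = -I * (-I * τ) ^ (1 / 2 : ℂ) * τ * eta3 τ := by
  have h0 := ne_zero_of_im_pos hτ
  have hleft : HasDerivAt (fun z ↦ oddTheta (-1 / τ) (-1 / τ * z))
      (2 * π * I * (I * eta3 (-1 / τ)) * (-1 / τ)) 0 :=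
    (hasDerivAt_oddTheta_zero (im_neg_one_div_pos hτ)).comp_of_eq 0
      (hasDerivAt_const_mul (-1 / τ)) (mul_zero _).symm
  have hexp : HasDerivAt (fun z ↦ e (z ^ 2 / (2 * τ))) 0 0 := by
    simpa [e] using
      (((hasDerivAt_pow 2 (0 : ℂ)).div_const (2 * τ)).const_mul (2 * π * I)).cexp
  have hright := (hexp.const_mul (I * (-I * τ) ^ (1 / 2 : ℂ))).mul (hasDerivAt_oddTheta_zero hτ)
  have hderiv := hleft.unique (hright.congr_of_eventuallyEq
    (.of_forall (oddTheta_neg_one_div h0)))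
  simp only [e, mul_zero, zero_mul, zero_add, ne_eq, OfNat.ofNat_ne_zero, not_false_eq_true,
    zero_pow, zero_div, Complex.exp_zero, mul_one] at hderiv
  generalize eta3 (-1 / τ) = η', (-I * τ) ^ (1 / 2 : ℂ) = s at hderiv ⊢
  have hpi : (π : ℂ) ≠ 0 := ofReal_ne_zero.2 Real.pi_ne_zero
  field_simp at hderiv
  linear_combination -hderiv

theorem thetaCoeff_neg_add_one (τ : ℂ) (m : ℤ) : thetaCoeff τ (-(m + 1)) = -thetaCoeff τ m := by
  have hexp : (((-(m + 1) : ℤ) : ℂ) + 1 / 2) ^ 2 / 2 * τ + (((-(m + 1) : ℤ) : ℂ) + 1 / 2) / 2 =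
      ((-m - 1 : ℤ) : ℂ) + (1 / 2 + (((m : ℂ) + 1 / 2) ^ 2 / 2 * τ + (m + 1 / 2) / 2)) := by
    push_cast; ring
  rw [thetaCoeff, hexp, e_add, e_intCast, e_add, e_one_div_two, one_mul, neg_one_mul, thetaCoeff]

theorem hasSum_nat_I_mul_eta3 (hτ : 0 < τ.im) :
    HasSum (fun n : ℕ ↦ 2 * (((n : ℂ) + 1 / 2) * thetaCoeff τ n)) (I * eta3 τ) := by
  refine (hasSum_I_mul_eta3 hτ).nat_add_neg_add_one.congr_fun fun n ↦ ?_
  rw [thetaCoeff_neg_add_one]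
  push_cast
  ring

theorem hasSum_nat_oddTheta (hτ : 0 < τ.im) (z : ℂ) :
    HasSum (fun n : ℕ ↦ 2 * (thetaCoeff τ n * Complex.sinh (2 * π * I * z * (n + 1 / 2))))
      (oddTheta τ z) := by
  refine (hasSum_oddTheta hτ z).nat_add_neg_add_one.congr_fun fun n ↦ ?_
  rw [thetaCoeff_neg_add_one, e_mul, e_mul, Complex.sinh]
  push_cast
  ring_nf

end OddTheta

section CoefficientBounds

variable {τ τ' : ℂ}

theorem norm_thetaCoeff (τ : ℂ) (m : ℤ) :
    ‖thetaCoeff τ m‖ = Real.exp (-(π * τ.im * ((m : ℝ) + 1 / 2) ^ 2)) := by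
  have him : ((m : ℂ) + 1 / 2) ^ 2 / 2 * τ + ((m : ℂ) + 1 / 2) / 2 =
      ((((m : ℝ) + 1 / 2) ^ 2 / 2 : ℝ) : ℂ) * τ + ((((m : ℝ) + 1 / 2) / 2 : ℝ) : ℂ) := by
    push_cast; ring
  rw [thetaCoeff, norm_e, him, Complex.add_im, Complex.im_ofReal_mul, Complex.ofReal_im]
  ring_nf

theorem norm_add_half_mul_thetaCoeff_le (h : τ.im ≤ τ'.im) (m : ℤ) :
    ‖((m : ℂ) + 1 / 2) * thetaCoeff τ' m‖ ≤
      Real.exp (-(π * (τ'.im - τ.im) / 4)) * ‖((m : ℂ) + 1 / 2) * thetaCoeff τ m‖ := by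
  have hsq : (1 / 4 : ℝ) ≤ ((m : ℝ) + 1 / 2) ^ 2 := by
    have : 0 ≤ m * (m + 1) := by rcases le_or_gt 0 m with h | h <;> nlinarith
    have : (0 : ℝ) ≤ m * (m + 1) := by exact_mod_cast this
    linarith
  have hdiff : 0 ≤ π * (τ'.im - τ.im) := mul_nonneg Real.pi_nonneg (sub_nonneg.2 h)
  rw [norm_mul, norm_mul, mul_left_comm, norm_thetaCoeff, norm_thetaCoeff, ← Real.exp_add]
  gcongr
  nlinarith

theorem norm_eta3_le (hτ : 0 < τ.im) (h : τ.im ≤ τ'.im) :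
    ‖eta3 τ'‖ ≤ Real.exp (-(π * (τ'.im - τ.im) / 4)) *
      ∑' m : ℤ, ‖((m : ℂ) + 1 / 2) * thetaCoeff τ m‖ := by
  have hsum := (hasSum_I_mul_eta3 hτ).summable.norm.hasSum.mul_left
    (Real.exp (-(π * (τ'.im - τ.im) / 4)))
  simpa using (hasSum_I_mul_eta3 (hτ.trans_le h)).norm_le_of_bounded hsum
    (norm_add_half_mul_thetaCoeff_le h)

theorem differentiableOn_eta3 : DifferentiableOn ℂ eta3 {τ | 0 < τ.im} := by
  intro τ (hτ : 0 < τ.im)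
  have hopen : IsOpen {w : ℂ | τ.im / 2 < w.im} := isOpen_lt continuous_const Complex.continuous_im
  have him : ((τ.im / 2 : ℝ) * I : ℂ).im = τ.im / 2 := by simp
  have hmajorant := (hasSum_I_mul_eta3 (him.symm ▸ half_pos hτ :
    0 < ((τ.im / 2 : ℝ) * I : ℂ).im)).summable.norm
  have hsum : DifferentiableOn ℂ (fun w ↦ ∑' m : ℤ, ((m : ℂ) + 1 / 2) * thetaCoeff w m)
      {w | τ.im / 2 < w.im} := by
    refine differentiableOn_tsum_of_summable_norm hmajorant (fun m ↦ ?_) hopen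
      fun m w (hw : τ.im / 2 < w.im) ↦ ?_
    · unfold thetaCoeff e
      fun_prop
    · refine (norm_add_half_mul_thetaCoeff_le (him.trans_le hw.le) m).trans
        (mul_le_of_le_one_left (norm_nonneg _) (Real.exp_le_one_iff.2 ?_))
      rw [him]
      have := mul_nonneg Real.pi_nonneg (sub_nonneg.2 hw.le)
      linarith
  exact ((hsum.differentiableAt (hopen.mem_nhds (half_lt_self hτ))).const_mul
    (-I)).differentiableWithinAt

end CoefficientBounds

section NonVanishing

variable {τ : ℂ}

theorem thetaCoeff_add_one (τ : ℂ) (m : ℤ) :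
    thetaCoeff (τ + 1) m = e (1 / 8) * thetaCoeff τ m := by
  obtain ⟨k, hk⟩ := Int.even_mul_succ_self m
  have hk' : (m : ℂ) * (m + 1) = k + k := by exact_mod_cast congrArg (Int.cast : ℤ → ℂ) hk
  have hexp : ((m : ℂ) + 1 / 2) ^ 2 / 2 * (τ + 1) + (m + 1 / 2) / 2 =
      k + (1 / 8 + (((m : ℂ) + 1 / 2) ^ 2 / 2 * τ + (m + 1 / 2) / 2)) := by
    linear_combination hk' / 2
  rw [thetaCoeff, hexp, e_add, e_intCast, e_add, one_mul, thetaCoeff]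

theorem eta3_add_one (τ : ℂ) : eta3 (τ + 1) = e (1 / 8) * eta3 τ := by
  simp_rw [eta3_eq_tsum, thetaCoeff_add_one, mul_left_comm _ (e (1 / 8)), tsum_mul_left]
  ring

theorem norm_two_mul_add_half_mul_thetaCoeff_I_le (n : ℕ) :
    ‖2 * (((n : ℂ) + 1 / 2) * thetaCoeff I n)‖ ≤ Real.exp (-(π / 4)) * (1 / 4) ^ n := by
  have hn : ‖(n : ℂ) + 1 / 2‖ = n + 1 / 2 := by
    rw [show (n : ℂ) + 1 / 2 = ((n + 1 / 2 : ℝ) : ℂ) by push_cast; rfl,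
      Complex.norm_of_nonneg (by positivity)]
  have hlin : (2 * n + 1 : ℝ) ≤ Real.exp (2 * n) := Real.add_one_le_exp _
  have hquarter : Real.exp (-4) ≤ 1 / 4 := by
    rw [Real.exp_neg, ← one_div]
    exact one_div_le_one_div_of_le (by norm_num) (by linarith [Real.add_one_le_exp (4 : ℝ)])
  have hquad : 6 * (n : ℝ) ≤ π * (n * (n + 1)) := by
    have : (n : ℝ) ≤ n ^ 2 := by exact_mod_cast Nat.le_self_pow two_ne_zero n
    nlinarith [Real.pi_gt_three]
  rw [norm_mul, norm_mul, hn, norm_thetaCoeff, Complex.norm_ofNat, I_im, mul_one, Int.cast_natCast]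
  calc 2 * ((n + 1 / 2) * Real.exp (-(π * ((n : ℝ) + 1 / 2) ^ 2)))
      = Real.exp (-(π / 4)) * ((2 * n + 1) * Real.exp (-(π * (n * (n + 1))))) := by
        rw [show -(π * ((n : ℝ) + 1 / 2) ^ 2) = -(π / 4) + -(π * (n * (n + 1))) by ring,
          Real.exp_add]
        ring
    _ ≤ Real.exp (-(π / 4)) * (Real.exp (2 * n) * Real.exp (-(6 * n))) := by gcongr
    _ = Real.exp (-(π / 4)) * Real.exp (-4) ^ n := by
        rw [← Real.exp_add, ← Real.exp_nat_mul]
        ring_nf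
    _ ≤ Real.exp (-(π / 4)) * (1 / 4) ^ n := by gcongr

/- The first term of the series for `η³(i)` exceeds the sum of all the others. -/
theorem eta3_I_ne_zero : eta3 I ≠ 0 := by
  intro h
  have hI : 0 < I.im := by simp
  have htail := (hasSum_nat_add_iff' 1).2 (hasSum_nat_I_mul_eta3 hI)
  have hgeom : HasSum (fun n : ℕ ↦ Real.exp (-(π / 4)) * (1 / 4) ^ (n + 1))
      (Real.exp (-(π / 4)) * (1 / 3)) := by
    refine HasSum.mul_left _ ?_
    simp_rw [pow_succ]
    convert (hasSum_geometric_of_lt_one (r := (1 / 4 : ℝ)) (by norm_num)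
      (by norm_num)).mul_right (1 / 4) using 1
    norm_num
  have hle := htail.norm_le_of_bounded hgeom
    fun n ↦ norm_two_mul_add_half_mul_thetaCoeff_I_le (n + 1)
  have hfirst : ‖2 * (((0 : ℂ) + 1 / 2) * thetaCoeff I 0)‖ = Real.exp (-(π / 4)) := by
    rw [zero_add, one_div, mul_inv_cancel_left₀ two_ne_zero, norm_thetaCoeff, I_im, Int.cast_zero]
    ring_nf
  simp only [h, mul_zero, Finset.range_one, Finset.sum_singleton, Nat.cast_zero, zero_sub,
    norm_neg, hfirst] at hle
  linarith [Real.exp_pos (-(π / 4))]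

open UpperHalfPlane hiding I
open SlashInvariantForm MatrixGroups ModularForm

/-- The function `η²⁴ = (η³)⁸` on the upper half plane. -/
noncomputable def eta24 (z : ℍ) : ℂ := eta3 z ^ 8

theorem eta24_slash_T : eta24 ∣[(12 : ℤ)] ModularGroup.T = eta24 := by
  ext z
  have hden : denom ((ModularGroup.T : SL(2, ℤ)) : GL (Fin 2) ℝ) z = 1 := by
    simp [denom, ModularGroup.coe_T]
  have hroot : e (1 / 8) ^ 8 = 1 := by
    rw [e_pow, show ((8 : ℕ) : ℂ) * (1 / 8) = (1 : ℤ) by norm_num, e_intCast]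
  have hT : ((((1 : ℝ) +ᵥ z : ℍ)) : ℂ) = z + 1 := by simp [add_comm]
  rw [SL_slash_apply, UpperHalfPlane.modular_T_smul, hden, one_zpow, mul_one, eta24, hT,
    eta3_add_one, mul_pow, hroot, one_mul, eta24]

theorem eta24_slash_S : eta24 ∣[(12 : ℤ)] ModularGroup.S = eta24 := by
  ext z
  have hz : (z : ℂ) ≠ 0 := UpperHalfPlane.ne_zero z
  have hden : denom ((ModularGroup.S : SL(2, ℤ)) : GL (Fin 2) ℝ) z = z := by
    simp [denom, ModularGroup.coe_S]
  have hpow : eta3 (-1 / z) ^ 8 = z ^ 12 * eta3 z ^ 8 := by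
    calc eta3 (-1 / z) ^ 8
        = (I ^ 4) ^ 2 * (((-I * z) ^ (1 / 2 : ℂ)) ^ 2) ^ 4 * z ^ 8 * eta3 z ^ 8 := by
          rw [eta3_neg_one_div z.2]; ring
      _ = (I ^ 4) ^ 3 * z ^ 12 * eta3 z ^ 8 := by rw [neg_I_mul_cpow_half_sq]; ring
      _ = z ^ 12 * eta3 z ^ 8 := by rw [I_pow_four, one_pow, one_mul]
  have hS : ((UpperHalfPlane.mk _ z.im_inv_neg_coe_pos : ℍ) : ℂ) = -1 / z := by
    simp [neg_div]
  rw [SL_slash_apply, UpperHalfPlane.modular_S_smul, hden, eta24, hS, hpow, eta24]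
  field_simp

theorem isZeroAtImInfty_eta24 : IsZeroAtImInfty eta24 := by
  have him : Tendsto UpperHalfPlane.im atImInfty atTop := tendsto_comap
  have hexp : Tendsto (fun v : ℝ ↦ Real.exp (-(π * (v - 1) / 4))) atTop (𝓝 0) := by
    refine Real.tendsto_exp_neg_atTop_nhds_zero.comp
      (((tendsto_atTop_add_const_right _ (-1) tendsto_id).const_mul_atTop
        Real.pi_pos).atTop_div_const four_pos)
  have hbound := (hexp.comp him).mul_const (∑' m : ℤ, ‖((m : ℂ) + 1 / 2) * thetaCoeff I m‖)
  rw [zero_mul] at hbound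
  have heta : Tendsto (fun z : ℍ ↦ eta3 z) atImInfty (𝓝 0) := by
    refine squeeze_zero_norm' ?_ hbound
    filter_upwards [him.eventually_ge_atTop 1] with z hz
    simpa using norm_eta3_le (τ := I) (by simp) (Complex.I_im.trans_le hz)
  exact (heta.pow 8).trans (by simp)

/-- `η²⁴` as a cusp form of level one and weight `12`. -/
noncomputable def eta24CuspForm : CuspForm 𝒮ℒ 12 where
  toFun := eta24
  slash_action_eq' A hA := by
    obtain ⟨A, rfl⟩ := hA
    exact slash_action_generators_SL2Z eta24_slash_S eta24_slash_T A
  holo' := by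
    rw [UpperHalfPlane.mdifferentiable_iff]
    refine .congr (f := fun z ↦ eta3 z ^ 8) (differentiableOn_eta3.pow 8) fun z hz ↦ ?_
    simp [eta24, ofComplex_apply_of_im_pos hz]
  zero_at_cusps' hc := by
    rw [Subgroup.IsArithmetic.isCusp_iff_isCusp_SL2Z] at hc
    rw [OnePoint.isZeroAt_iff_forall_SL2Z hc]
    intro γ _
    rw [slash_action_generators_SL2Z eta24_slash_S eta24_slash_T]
    exact isZeroAtImInfty_eta24

theorem eta3_ne_zero (hτ : 0 < τ.im) : eta3 τ ≠ 0 := by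
  obtain ⟨c, hc⟩ := CuspForm.exists_smul_discriminant_of_weight_eq_twelve eta24CuspForm
  have heq (z : ℍ) : c * ModularForm.discriminant z = eta3 z ^ 8 := DFunLike.congr_fun hc z
  have hc0 : c ≠ 0 := by
    rintro rfl
    exact pow_ne_zero 8 eta3_I_ne_zero (by simpa using (heq UpperHalfPlane.I).symm)
  refine pow_ne_zero_iff (n := 8) (by norm_num) |>.1 ?_
  exact heq ⟨τ, hτ⟩ ▸ mul_ne_zero hc0 (discriminant_ne_zero _)

end NonVanishing

section Integration

variable {ι α E 𝕜 : Type*} [MeasurableSpace α] {μ : Measure α} [NormedAddCommGroup E] [RCLike 𝕜]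

theorem integrable_of_hasSum [Countable ι] {F : ι → α → E} {f : α → E}
    (hF : ∀ i, Integrable (F i) μ) (hsum : Summable fun i ↦ ∫ x, ‖F i x‖ ∂μ)
    (hf : ∀ x, HasSum (fun i ↦ F i x) (f x)) : Integrable f μ := by
  refine ⟨aestronglyMeasurable_of_tendsto_ae atTop (f := fun s x ↦ ∑ i ∈ s, F i x)
    (fun s ↦ (integrable_finsetSum s fun i _ ↦ hF i).1) (.of_forall hf), ?_⟩
  calc ∫⁻ x, ‖f x‖ₑ ∂μ ≤ ∫⁻ x, ∑' i, ‖F i x‖ₑ ∂μ :=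
        lintegral_mono fun x ↦ (hf x).tsum_eq ▸ enorm_tsum_le_tsum_enorm
    _ = ∑' i, ENNReal.ofReal (∫ x, ‖F i x‖ ∂μ) := by
        simp_rw [lintegral_tsum fun i ↦ (hF i).1.enorm,
          ofReal_integral_norm_eq_lintegral_enorm (hF _)]
    _ < ⊤ := hsum.tsum_ofReal_lt_top

theorem hasSum_integral_mul_of_norm_le [Countable ι] {F : ι → α → 𝕜} {f g : α → 𝕜} {C : ℝ}
    (hF : ∀ i, Integrable (F i) μ) (hsum : Summable fun i ↦ ∫ x, ‖F i x‖ ∂μ)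
    (hf : ∀ x, HasSum (fun i ↦ F i x) (f x)) (hg : AEStronglyMeasurable g μ)
    (hgC : ∀ x, ‖g x‖ ≤ C) :
    HasSum (fun i ↦ ∫ x, F i x * g x ∂μ) (∫ x, f x * g x ∂μ) := by
  have hFg (i : ι) : Integrable (fun x ↦ F i x * g x) μ := (hF i).mul_bdd hg (.of_forall hgC)
  have hsum' : Summable fun i ↦ ∫ x, ‖F i x * g x‖ ∂μ := by
    refine .of_nonneg_of_le (fun i ↦ integral_nonneg fun x ↦ norm_nonneg _) (fun i ↦ ?_)
      (hsum.mul_right C)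
    rw [← integral_mul_const]
    refine integral_mono (hFg i).norm ((hF i).norm.mul_const C) fun x ↦ ?_
    simpa only [norm_mul] using mul_le_mul_of_nonneg_left (hgC x) (norm_nonneg _)
  simpa only [((hf _).mul_right _).tsum_eq] using
    hasSum_integral_of_summable_integral_norm hFg hsum'

theorem integral_eq_integral_Ioi_add_comp_neg [NormedSpace ℝ E] {f : ℝ → E} (hf : Integrable f) :
    ∫ x, f x = ∫ x in Set.Ioi 0, (f x + f (-x)) := by
  rw [integral_add hf.integrableOn hf.comp_neg.integrableOn, integral_comp_neg_Ioi, neg_zero,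
    add_comm, intervalIntegral.integral_Iic_add_Ioi hf.integrableOn hf.integrableOn]

theorem integral_sign_mul_comp_abs_mul_cexp {φ : ℝ → ℂ} {k : ℂ}
    (hint : Integrable fun w : ℝ ↦ (Real.sign w : ℂ) * φ |w| * cexp (k * w)) :
    ∫ w : ℝ, (Real.sign w : ℂ) * φ |w| * cexp (k * w) =
      2 * ∫ w : ℝ in Set.Ioi 0, φ w * Complex.sinh (k * w) := by
  rw [integral_eq_integral_Ioi_add_comp_neg hint, ← integral_const_mul]
  refine setIntegral_congr_fun measurableSet_Ioi fun w (hw : 0 < w) ↦ ?_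
  simp only [Real.sign_of_pos hw, Real.sign_of_neg (neg_neg_of_pos hw), abs_neg, abs_of_pos hw,
    Complex.sinh]
  push_cast
  ring_nf

end Integration

section Sign

@[fun_prop]
theorem measurable_sign : Measurable Real.sign :=
  .ite measurableSet_Iio measurable_const <|
    .ite measurableSet_Ioi measurable_const measurable_const

theorem norm_ofReal_sign_le (x : ℝ) : ‖(Real.sign x : ℂ)‖ ≤ 1 := by
  rcases Real.sign_apply_eq x with h | h | h <;> simp [h]

theorem continuous_sign_mul {f : ℝ → ℂ} (hf : Continuous f) (h0 : f 0 = 0) :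
    Continuous fun x ↦ (Real.sign x : ℂ) * f x := by
  refine continuous_iff_continuousAt.2 fun x ↦ ?_
  rcases lt_trichotomy x 0 with hx | rfl | hx
  · refine hf.neg.continuousAt.congr ?_
    filter_upwards [gt_mem_nhds hx] with y hy
    simp [Real.sign_of_neg hy]
  · rw [ContinuousAt, h0, mul_zero]
    refine squeeze_zero_norm (fun y ↦ ?_) (by simpa [h0] using (hf.tendsto 0).norm)
    rw [norm_mul]
    exact mul_le_of_le_one_left (norm_nonneg _) (norm_ofReal_sign_le y)
  · refine hf.continuousAt.congr ?_
    filter_upwards [lt_mem_nhds hx] with y hy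
    simp [Real.sign_of_pos hy]

end Sign

section Tent

variable {M : ℝ}

theorem integrable_max_sub_abs_mul {f : ℝ → ℝ} (hf : Continuous f) :
    Integrable fun x ↦ max (M - |x|) 0 * f x := by
  refine Continuous.integrable_of_hasCompactSupport (by fun_prop) ?_
  refine .intro (isCompact_Icc (a := -M) (b := M)) fun x hx ↦ ?_
  have hM : M ≤ |x| := by
    by_contra! h
    exact hx (abs_le.1 h.le)
  rw [max_eq_right (sub_nonpos.2 hM), zero_mul]

theorem integral_Ioi_max_sub_smul {E : Type*} [NormedAddCommGroup E] [NormedSpace ℝ E]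
    (hM : 0 ≤ M) (f : ℝ → E) :
    ∫ x in Set.Ioi 0, max (M - x) 0 • f x = ∫ x in (0 : ℝ)..M, (M - x) • f x := by
  rw [intervalIntegral.integral_of_le hM]
  refine (setIntegral_eq_of_subset_of_forall_sdiff_eq_zero measurableSet_Ioi
    Set.Ioc_subset_Ioi_self fun x hx ↦ ?_).trans
    (setIntegral_congr_fun measurableSet_Ioc fun x hx ↦ ?_)
  · have hMx : M ≤ x := by
      by_contra! h
      exact hx.2 ⟨hx.1, h.le⟩
    rw [max_eq_right (sub_nonpos.2 hMx), zero_smul]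
  · simp only [max_eq_left (sub_nonneg.2 hx.2)]

theorem sq_mul_integral_sub_mul_cexp (k : ℂ) (M : ℝ) :
    k ^ 2 * ∫ x in (0 : ℝ)..M, (M - x) • cexp (k * x) = cexp (k * M) - k * M - 1 := by
  have hderiv (x : ℝ) : HasDerivAt (fun x : ℝ ↦ (k * (M - x) + 1) * cexp (k * x))
      (k ^ 2 * ((M - x) • cexp (k * x))) x := by
    have hlin : HasDerivAt (fun x : ℂ ↦ k * (M - x) + 1) (k * -1) x :=
      (((hasDerivAt_id _).const_sub _).const_mul k).add_const 1
    refine ((hlin.mul (hasDerivAt_const_mul k).cexp).congr_deriv ?_).comp_ofReal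
    rw [Complex.real_smul]
    push_cast
    ring
  rw [← intervalIntegral.integral_const_mul, intervalIntegral.integral_eq_sub_of_hasDerivAt
    (fun x _ ↦ hderiv x) (Continuous.intervalIntegrable (by fun_prop) _ _)]
  simp only [sub_self, mul_zero, zero_add, one_mul, ofReal_zero, sub_zero, Complex.exp_zero,
    mul_one]
  ring

theorem sq_mul_integral_Ioi_max_sub_mul_sinh (k : ℂ) (hM : 0 ≤ M) :
    k ^ 2 * ∫ x : ℝ in Set.Ioi 0, (max (M - x) 0 : ℝ) * Complex.sinh (k * x) =
      Complex.sinh (k * M) - k * M := by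
  have hsplit (x : ℝ) : (M - x) • Complex.sinh (k * x) =
      ((M - x) • cexp (k * x) - (M - x) • cexp (-k * x)) / 2 := by
    simp only [Complex.sinh, Complex.real_smul]
    ring_nf
  have hint (k : ℂ) : IntervalIntegrable (fun x : ℝ ↦ (M - x) • cexp (k * x)) volume 0 M :=
    Continuous.intervalIntegrable (by fun_prop) _ _
  simp_rw [← Complex.real_smul, integral_Ioi_max_sub_smul hM, hsplit]
  rw [intervalIntegral.integral_div, intervalIntegral.integral_sub (hint k) (hint (-k)),
    Complex.sinh, ← neg_mul]
  linear_combination (sq_mul_integral_sub_mul_cexp k M - sq_mul_integral_sub_mul_cexp (-k) M) / 2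

theorem sq_mul_integral_sub_mul_exp (k M : ℝ) :
    k ^ 2 * ∫ x in (0 : ℝ)..M, (M - x) • Real.exp (k * x) = Real.exp (k * M) - k * M - 1 := by
  have h := sq_mul_integral_sub_mul_cexp k M
  simp only [Complex.real_smul] at h
  rw [← ofReal_inj]
  simp only [smul_eq_mul]
  push_cast [← intervalIntegral.integral_ofReal]
  exact_mod_cast h

/- On the support of the tent, `x² ≤ M|x|`, which replaces the Gaussian by an exponential. -/
theorem integral_max_sub_abs_mul_exp_sq_le {a : ℝ} (ha : 0 < a) (hM : 0 < M) :
    ∫ x, max (M - |x|) 0 * Real.exp (a * x ^ 2) ≤ 2 * Real.exp (a * M ^ 2) / (a * M) ^ 2 := by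
  have hpoint (x : ℝ) : max (M - |x|) 0 * Real.exp (a * x ^ 2) ≤
      max (M - |x|) 0 * Real.exp (a * M * |x|) := by
    rcases le_total M |x| with h | h
    · simp [max_eq_right (sub_nonpos.2 h)]
    · have : x ^ 2 ≤ M * |x| := by
        rw [← sq_abs, sq]
        exact mul_le_mul_of_nonneg_right h (abs_nonneg x)
      rw [mul_assoc]
      gcongr
  calc ∫ x, max (M - |x|) 0 * Real.exp (a * x ^ 2)
      ≤ ∫ x, max (M - |x|) 0 * Real.exp (a * M * |x|) :=
        integral_mono (integrable_max_sub_abs_mul (by fun_prop))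
          (integrable_max_sub_abs_mul (by fun_prop)) hpoint
    _ = 2 * ∫ x in (0 : ℝ)..M, (M - x) • Real.exp (a * M * x) := by
        rw [integral_comp_abs (f := fun t ↦ max (M - t) 0 * Real.exp (a * M * t)),
          ← integral_Ioi_max_sub_smul hM.le]
        simp only [smul_eq_mul]
    _ ≤ 2 * Real.exp (a * M ^ 2) / (a * M) ^ 2 := by
        rw [le_div_iff₀ (by positivity), mul_assoc, mul_comm (intervalIntegral _ _ _ _),
          sq_mul_integral_sub_mul_exp, mul_assoc a M M, ← sq]
        nlinarith [mul_nonneg ha.le (sq_nonneg M)]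

end Tent

section Chirp

variable {τ : ℂ}

/-- The Gaussian `w ↦ e(w²τ/2 + wz)`, a Gaussian of parameter `τ` modulated by `z`. -/
noncomputable def chirp (τ z : ℂ) (w : ℝ) : ℂ := e ((w : ℂ) ^ 2 * τ / 2 + w * z)

/-- The transform `z ↦ ∫ g(w) e(w²τ/2 + wz) dw`, the Fourier transform of `g` times a Gaussian. -/
noncomputable def chirpTransform (τ : ℂ) (g : ℝ → ℂ) (z : ℂ) : ℂ := ∫ w, g w * chirp τ z w

@[fun_prop]
theorem continuous_chirp (τ z : ℂ) : Continuous (chirp τ z) := by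
  unfold chirp; fun_prop

/- Complete the square: `-(v w² + 2 w Im z) ≤ (Im z)² / v`. -/
theorem norm_chirp_le (hτ : 0 < τ.im) (z : ℂ) (w : ℝ) :
    ‖chirp τ z w‖ ≤ Real.exp (π * z.im ^ 2 / τ.im) := by
  have him : ((w : ℂ) ^ 2 * τ / 2 + w * z).im = w ^ 2 * τ.im / 2 + w * z.im := by
    rw [Complex.add_im, Complex.im_ofReal_mul, Complex.div_ofNat_im, ← ofReal_pow,
      Complex.im_ofReal_mul]
  rw [chirp, norm_e, him]
  gcongr
  rw [le_div_iff₀ hτ]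
  nlinarith [mul_nonneg Real.pi_pos.le (sq_nonneg (w * τ.im + z.im))]

theorem integrable_mul_chirp (hτ : 0 < τ.im) {g : ℝ → ℂ} (hg : Integrable g) (z : ℂ) :
    Integrable fun w ↦ g w * chirp τ z w :=
  hg.mul_bdd (continuous_chirp τ z).aestronglyMeasurable (.of_forall (norm_chirp_le hτ z))

theorem chirp_eq_cexp (τ z : ℂ) (w : ℝ) :
    chirp τ z w = cexp (π * I * τ * w ^ 2 + 2 * π * I * z * w + 0) := by
  rw [chirp, e]; ring_nf

theorem re_pi_mul_I_mul_neg (hτ : 0 < τ.im) : (π * I * τ).re < 0 := by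
  have hre : (π * I * τ).re = -(π * τ.im) := by simp [mul_assoc]
  rw [hre, neg_lt_zero]
  exact mul_pos Real.pi_pos hτ

theorem integrable_chirp (hτ : 0 < τ.im) (z : ℂ) : Integrable (chirp τ z) :=
  (integrable_cexp_quadratic' (re_pi_mul_I_mul_neg hτ) (2 * π * I * z) 0).congr
    (.of_forall fun w ↦ (chirp_eq_cexp τ z w).symm)

theorem integral_chirp (hτ : 0 < τ.im) (z : ℂ) :
    ∫ w, chirp τ z w = 1 / (-I * τ) ^ (1 / 2 : ℂ) * e (-z ^ 2 / (2 * τ)) := by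
  have h0 := ne_zero_of_im_pos hτ
  have hpi : (π : ℂ) ≠ 0 := ofReal_ne_zero.2 Real.pi_ne_zero
  have harg : (-I * τ).arg ≠ π := fun h ↦ by
    have := (Complex.arg_eq_pi_iff.1 h).1
    simp only [neg_mul, neg_re, mul_re, I_re, I_im, zero_mul, one_mul, zero_sub, neg_neg] at this
    exact this.not_gt hτ
  have hdiv : π / -(π * I * τ) = (-I * τ)⁻¹ := by field_simp
  simp_rw [chirp_eq_cexp]
  rw [integral_cexp_quadratic (re_pi_mul_I_mul_neg hτ), hdiv, Complex.inv_cpow _ _ harg, one_div,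
    one_div, e]
  congr 2
  field_simp
  ring

end Chirp

section OddGauss

variable {τ : ℂ} {φ : ℝ → ℂ}

/-- The odd function equal to `e(-x²τ/2) φ(x)` for `x > 0`; the functions `g⁺_τ`, `g*_τ` and `g_τ`
all have this shape. -/
noncomputable def oddGauss (τ : ℂ) (φ : ℝ → ℂ) (x : ℝ) : ℂ :=
  e (-(x : ℂ) ^ 2 * τ / 2) * ((Real.sign x : ℂ) * φ |x|)

theorem norm_oddGauss_le (τ : ℂ) (φ : ℝ → ℂ) (x : ℝ) :
    ‖oddGauss τ φ x‖ ≤ Real.exp (π * τ.im * x ^ 2) * ‖φ |x|‖ := by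
  have him : (-(x : ℂ) ^ 2 * τ / 2).im = -x ^ 2 * τ.im / 2 := by
    rw [Complex.div_ofNat_im, ← ofReal_pow, ← ofReal_neg, Complex.im_ofReal_mul]
  rw [oddGauss, norm_mul, norm_e, him, norm_mul]
  refine mul_le_mul (le_of_eq ?_)
    (mul_le_of_le_one_left (norm_nonneg _) (norm_ofReal_sign_le x)) (by positivity) (by positivity)
  ring_nf

theorem measurable_oddGauss (hφ : Measurable φ) : Measurable (oddGauss τ φ) := by
  unfold oddGauss
  have : Measurable fun x : ℝ ↦ e (-(x : ℂ) ^ 2 * τ / 2) := Continuous.measurable (by fun_prop)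
  fun_prop

theorem continuous_oddGauss (hφ : Continuous fun x : ℝ ↦ φ |x|) (h0 : φ 0 = 0) :
    Continuous (oddGauss τ φ) := by
  have := continuous_sign_mul hφ (by rwa [abs_zero])
  unfold oddGauss
  fun_prop

theorem oddGauss_mul_chirp (τ : ℂ) (φ : ℝ → ℂ) (z : ℂ) (x : ℝ) :
    oddGauss τ φ x * chirp τ z x = (Real.sign x : ℂ) * φ |x| * cexp (2 * π * I * z * x) := by
  have h := e_neg_mul_e ((x : ℂ) ^ 2 * τ / 2)
  rw [oddGauss, chirp, e_add, ← e_mul, neg_mul, neg_div]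
  linear_combination (Real.sign x : ℂ) * φ |x| * e (x * z) * h

theorem chirpTransform_oddGauss (hτ : 0 < τ.im) (hφ : Integrable (oddGauss τ φ)) (z : ℂ) :
    chirpTransform τ (oddGauss τ φ) z =
      2 * ∫ x : ℝ in Set.Ioi 0, φ x * Complex.sinh (2 * π * I * z * x) := by
  have hint := integrable_mul_chirp hτ hφ z
  simp_rw [oddGauss_mul_chirp] at hint
  simp_rw [chirpTransform, oddGauss_mul_chirp]
  exact integral_sign_mul_comp_abs_mul_cexp hint

end OddGauss

section TentSeries

variable {τ : ℂ}

/-- The `n`-th term `max(m - t, 0) e(m²τ/2 + m/2)`, `m = n + 1/2`, of the series defining `g⁺_τ`. -/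
noncomputable def tentTerm (τ : ℂ) (n : ℕ) (t : ℝ) : ℂ :=
  (max ((n : ℝ) + 1 / 2 - t) 0 : ℝ) * thetaCoeff τ n

/-- The series `∑_{m ∈ ℤ+1/2, m > t} (m - t) e(m²τ/2 + m/2)` for `t ≥ 0`. -/
noncomputable def tentSeries (τ : ℂ) (t : ℝ) : ℂ := ∑' n, tentTerm τ n t

@[fun_prop]
theorem continuous_tentTerm (τ : ℂ) (n : ℕ) : Continuous (tentTerm τ n) := by
  unfold tentTerm; fun_prop

theorem norm_tentTerm (τ : ℂ) (n : ℕ) (t : ℝ) : ‖tentTerm τ n t‖ =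
    max ((n : ℝ) + 1 / 2 - t) 0 * Real.exp (-(π * τ.im * ((n : ℝ) + 1 / 2) ^ 2)) := by
  rw [tentTerm, norm_mul, Complex.norm_of_nonneg (le_max_right _ _), norm_thetaCoeff,
    Int.cast_natCast]

theorem norm_tentTerm_abs_le (τ : ℂ) (n : ℕ) (x : ℝ) :
    ‖tentTerm τ n |x|‖ ≤ ‖tentTerm τ n 0‖ := by
  simp only [norm_tentTerm]
  gcongr
  exact abs_nonneg x

theorem hasSum_tentTerm_zero (hτ : 0 < τ.im) :
    HasSum (fun n ↦ tentTerm τ n 0) (I * eta3 τ / 2) := by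
  refine ((hasSum_nat_I_mul_eta3 hτ).div_const 2).congr_fun fun n ↦ ?_
  rw [tentTerm, sub_zero, max_eq_left (by positivity), mul_div_cancel_left₀ _ two_ne_zero]
  push_cast
  rfl

theorem tentSeries_zero (hτ : 0 < τ.im) : tentSeries τ 0 = I * eta3 τ / 2 :=
  (hasSum_tentTerm_zero hτ).tsum_eq

theorem hasSum_tentTerm_abs (hτ : 0 < τ.im) (x : ℝ) :
    HasSum (fun n ↦ tentTerm τ n |x|) (tentSeries τ |x|) :=
  (Summable.of_norm_bounded (hasSum_tentTerm_zero hτ).summable.norm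
    fun n ↦ norm_tentTerm_abs_le τ n x).hasSum

theorem continuous_tentSeries_abs (hτ : 0 < τ.im) : Continuous fun x : ℝ ↦ tentSeries τ |x| :=
  continuous_tsum (fun n ↦ by fun_prop) (hasSum_tentTerm_zero hτ).summable.norm
    fun n x ↦ norm_tentTerm_abs_le τ n x

theorem gplus_eq_oddGauss_tentSeries (τ : ℂ) (x : ℝ) :
    gplus τ x = oddGauss τ (tentSeries τ) x / (I * eta3 τ) := by
  have hseries : (∑' m : ℤ, if |x| < (m : ℝ) + 1 / 2 then
      (((m : ℝ) + 1 / 2 - |x| : ℝ) : ℂ) * e (((m : ℂ) + 1 / 2) ^ 2 / 2 * τ + ((m : ℂ) + 1 / 2) / 2)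
      else 0) = tentSeries τ |x| := by
    rw [← (Nat.cast_injective (R := ℤ)).tsum_eq]
    · refine tsum_congr fun n ↦ ?_
      rw [tentTerm, Int.cast_natCast]
      split_ifs with h
      · rw [max_eq_left (sub_pos.2 h).le, thetaCoeff]
      · rw [max_eq_right (sub_nonpos.2 (not_lt.1 h)), ofReal_zero, zero_mul]
    · intro m hm
      simp only [Function.mem_support, ne_eq, ite_eq_right_iff, Classical.not_imp] at hm
      have hm' : (-1 : ℝ) < m := by linarith [abs_nonneg x, hm.1]
      have : -1 < m := by exact_mod_cast hm'
      exact ⟨m.toNat, Int.toNat_of_nonneg (by omega)⟩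
  rw [gplus, hseries, oddGauss]
  ring

theorem norm_oddGauss_tentTerm_le (τ : ℂ) (n : ℕ) (x : ℝ) :
    ‖oddGauss τ (tentTerm τ n) x‖ ≤ max ((n : ℝ) + 1 / 2 - |x|) 0 *
      Real.exp (π * τ.im * x ^ 2) * Real.exp (-(π * τ.im * ((n : ℝ) + 1 / 2) ^ 2)) := by
  refine (norm_oddGauss_le _ _ _).trans_eq ?_
  rw [norm_tentTerm]
  ring

theorem integrable_oddGauss_tentTerm (τ : ℂ) (n : ℕ) : Integrable (oddGauss τ (tentTerm τ n)) :=
  ((integrable_max_sub_abs_mul (by fun_prop)).mul_const _).mono'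
    (measurable_oddGauss (by fun_prop)).aestronglyMeasurable
    (.of_forall (norm_oddGauss_tentTerm_le τ n))

theorem integral_norm_oddGauss_tentTerm_le (hτ : 0 < τ.im) (n : ℕ) :
    ∫ x, ‖oddGauss τ (tentTerm τ n) x‖ ≤
      2 / (π * τ.im) ^ 2 * (1 / |(n : ℝ) + 1 / 2| ^ (2 : ℝ)) := by
  have ha : 0 < π * τ.im := mul_pos Real.pi_pos hτ
  have hM : 0 < (n : ℝ) + 1 / 2 := by positivity
  calc ∫ x, ‖oddGauss τ (tentTerm τ n) x‖
      ≤ (∫ x, max ((n : ℝ) + 1 / 2 - |x|) 0 * Real.exp (π * τ.im * x ^ 2)) *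
          Real.exp (-(π * τ.im * ((n : ℝ) + 1 / 2) ^ 2)) := by
        rw [← integral_mul_const]
        exact integral_mono (integrable_oddGauss_tentTerm τ n).norm
          ((integrable_max_sub_abs_mul (by fun_prop)).mul_const _) (norm_oddGauss_tentTerm_le τ n)
    _ ≤ 2 * Real.exp (π * τ.im * ((n : ℝ) + 1 / 2) ^ 2) / (π * τ.im * ((n : ℝ) + 1 / 2)) ^ 2 *
          Real.exp (-(π * τ.im * ((n : ℝ) + 1 / 2) ^ 2)) := by
        gcongr
        exact integral_max_sub_abs_mul_exp_sq_le ha hM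
    _ = 2 / (π * τ.im) ^ 2 * (1 / |(n : ℝ) + 1 / 2| ^ (2 : ℝ)) := by
        rw [Real.exp_neg, Real.rpow_two, sq_abs]
        field_simp

theorem summable_integral_norm_oddGauss_tentTerm (hτ : 0 < τ.im) :
    Summable fun n ↦ ∫ x, ‖oddGauss τ (tentTerm τ n) x‖ :=
  .of_nonneg_of_le (fun _ ↦ integral_nonneg fun _ ↦ norm_nonneg _)
    (integral_norm_oddGauss_tentTerm_le hτ)
    (((Real.summable_one_div_nat_add_rpow (1 / 2) 2).2 one_lt_two).mul_left _)

theorem hasSum_oddGauss_tentTerm (hτ : 0 < τ.im) (x : ℝ) :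
    HasSum (fun n ↦ oddGauss τ (tentTerm τ n) x) (oddGauss τ (tentSeries τ) x) :=
  ((hasSum_tentTerm_abs hτ x).mul_left _).mul_left _

theorem integrable_oddGauss_tentSeries (hτ : 0 < τ.im) : Integrable (oddGauss τ (tentSeries τ)) :=
  integrable_of_hasSum (integrable_oddGauss_tentTerm τ)
    (summable_integral_norm_oddGauss_tentTerm hτ) (hasSum_oddGauss_tentTerm hτ)

theorem sq_mul_chirpTransform_oddGauss_tentTerm (hτ : 0 < τ.im) (n : ℕ) (z : ℂ) :
    (2 * π * I * z) ^ 2 * chirpTransform τ (oddGauss τ (tentTerm τ n)) z =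
      2 * (thetaCoeff τ n * Complex.sinh (2 * π * I * z * (n + 1 / 2))) -
        2 * π * I * z * (2 * ((n + 1 / 2) * thetaCoeff τ n)) := by
  have h := sq_mul_integral_Ioi_max_sub_mul_sinh (2 * π * I * z)
    (by positivity : 0 ≤ (n : ℝ) + 1 / 2)
  push_cast at h
  rw [chirpTransform_oddGauss hτ (integrable_oddGauss_tentTerm τ n)]
  simp_rw [tentTerm, mul_right_comm _ (thetaCoeff τ n)]
  rw [integral_mul_const]
  linear_combination 2 * thetaCoeff τ n * h

theorem sq_mul_chirpTransform_oddGauss_tentSeries (hτ : 0 < τ.im) (z : ℂ) :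
    (2 * π * I * z) ^ 2 * chirpTransform τ (oddGauss τ (tentSeries τ)) z =
      oddTheta τ z - 2 * π * I * z * (I * eta3 τ) := by
  have htransform := (hasSum_integral_mul_of_norm_le (integrable_oddGauss_tentTerm τ)
    (summable_integral_norm_oddGauss_tentTerm hτ) (hasSum_oddGauss_tentTerm hτ)
    (continuous_chirp τ z).aestronglyMeasurable (norm_chirp_le hτ z)).mul_left
    ((2 * π * I * z) ^ 2)
  have htheta := (hasSum_nat_oddTheta hτ z).sub
    ((hasSum_nat_I_mul_eta3 hτ).mul_left (2 * π * I * z))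
  exact htransform.unique
    (htheta.congr_fun fun n ↦ sq_mul_chirpTransform_oddGauss_tentTerm hτ n z)

end TentSeries

section Erfc

theorem integrable_exp_neg_sq : Integrable fun t : ℝ ↦ Real.exp (-t ^ 2) := by
  simpa using integrable_exp_neg_mul_sq one_pos

theorem integral_Ioi_exp_neg_sq : ∫ t in Set.Ioi (0 : ℝ), Real.exp (-t ^ 2) = √π / 2 := by
  simpa using integral_gaussian_Ioi 1

theorem erfc_zero : erfc 0 = 1 := by
  rw [erfc, integral_Ioi_exp_neg_sq]
  field_simp

theorem erfc_nonneg (x : ℝ) : 0 ≤ erfc x :=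
  mul_nonneg (by positivity) (integral_nonneg fun _ ↦ Real.exp_nonneg _)

theorem hasDerivAt_erfc (x : ℝ) : HasDerivAt erfc (-(2 / √π * Real.exp (-x ^ 2))) x := by
  have herfc : erfc = fun y ↦ 2 / √π *
      ((∫ t in Set.Ioi 0, Real.exp (-t ^ 2)) - ∫ t in (0 : ℝ)..y, Real.exp (-t ^ 2)) := by
    funext y
    rw [erfc, ← intervalIntegral.integral_Ioi_sub_Ioi' integrable_exp_neg_sq.integrableOn
      integrable_exp_neg_sq.integrableOn, sub_sub_cancel]
  have hcont : Continuous fun t : ℝ ↦ Real.exp (-t ^ 2) := by fun_prop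
  rw [herfc, ← mul_neg]
  exact ((hcont.integral_hasStrictDerivAt 0 x).hasDerivAt.const_sub _).const_mul _

@[fun_prop]
theorem continuous_erfc : Continuous erfc :=
  continuous_iff_continuousAt.2 fun x ↦ (hasDerivAt_erfc x).continuousAt

theorem erfc_le_exp_neg_sq {x : ℝ} (hx : 0 ≤ x) : erfc x ≤ Real.exp (-x ^ 2) := by
  have hshift := (measurePreserving_add_right volume x).setIntegral_preimage_emb
    (MeasurableEquiv.addRight x).measurableEmbedding (fun t ↦ Real.exp (-t ^ 2)) (Set.Ioi x)
  rw [Set.preimage_add_const_Ioi, sub_self] at hshift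
  calc erfc x = 2 / √π * ∫ t in Set.Ioi (0 : ℝ), Real.exp (-(t + x) ^ 2) := by rw [erfc, hshift]
    _ ≤ 2 / √π * ∫ t in Set.Ioi (0 : ℝ), Real.exp (-t ^ 2) * Real.exp (-x ^ 2) := by
        refine mul_le_mul_of_nonneg_left (setIntegral_mono_on
          (integrable_exp_neg_sq.comp_add_right x).integrableOn
          (integrable_exp_neg_sq.mul_const _).integrableOn measurableSet_Ioi
          fun t (ht : 0 < t) ↦ ?_) (by positivity)
        rw [← Real.exp_add]
        gcongr
        nlinarith [mul_nonneg ht.le hx]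
    _ = Real.exp (-x ^ 2) := by
        rw [integral_mul_const, integral_Ioi_exp_neg_sq]
        field_simp

theorem integrableOn_erfc_mul {c : ℝ} (hc : 0 ≤ c) {f : ℝ → ℂ} (hf : Continuous f)
    (hint : Integrable fun x : ℝ ↦ (Real.exp (-(c * x) ^ 2) : ℂ) * f x) :
    IntegrableOn (fun x : ℝ ↦ (erfc (c * x) : ℂ) * f x) (Set.Ioi 0) := by
  refine hint.norm.integrableOn.mono' (Continuous.aestronglyMeasurable (by fun_prop)) ?_
  refine ae_restrict_of_forall_mem measurableSet_Ioi fun x (hx : 0 < x) ↦ ?_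
  rw [norm_mul, norm_mul, Complex.norm_of_nonneg (erfc_nonneg _),
    Complex.norm_of_nonneg (Real.exp_nonneg _)]
  gcongr
  exact erfc_le_exp_neg_sq (mul_nonneg hc hx.le)

end Erfc

section GaussianHyperbolic

variable {c : ℝ}

theorem ofReal_exp_neg_sq_mul_cexp (c : ℝ) (k : ℂ) (x : ℝ) :
    (Real.exp (-(c * x) ^ 2) : ℂ) * cexp (k * x) =
      cexp (-(c : ℂ) ^ 2 * x ^ 2 + k * x + 0) := by
  push_cast
  rw [← Complex.exp_add]
  ring_nf

theorem re_neg_ofReal_sq_neg (hc : 0 < c) : (-(c : ℂ) ^ 2).re < 0 := by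
  rw [← ofReal_pow, neg_re, ofReal_re, neg_lt_zero]
  positivity

theorem integrable_exp_neg_sq_mul_cexp (hc : 0 < c) (k : ℂ) :
    Integrable fun x : ℝ ↦ (Real.exp (-(c * x) ^ 2) : ℂ) * cexp (k * x) := by
  simp_rw [ofReal_exp_neg_sq_mul_cexp]
  exact integrable_cexp_quadratic' (re_neg_ofReal_sq_neg hc) k 0

theorem integrable_exp_neg_sq_mul_cosh (hc : 0 < c) (k : ℂ) :
    Integrable fun x : ℝ ↦ (Real.exp (-(c * x) ^ 2) : ℂ) * Complex.cosh (k * x) := by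
  refine (((integrable_exp_neg_sq_mul_cexp hc k).add
    (integrable_exp_neg_sq_mul_cexp hc (-k))).div_const 2).congr (.of_forall fun x ↦ ?_)
  simp only [Pi.add_apply, Complex.cosh, neg_mul]
  ring

theorem integrable_exp_neg_sq_mul_sinh (hc : 0 < c) (k : ℂ) :
    Integrable fun x : ℝ ↦ (Real.exp (-(c * x) ^ 2) : ℂ) * Complex.sinh (k * x) := by
  refine (((integrable_exp_neg_sq_mul_cexp hc k).sub
    (integrable_exp_neg_sq_mul_cexp hc (-k))).div_const 2).congr (.of_forall fun x ↦ ?_)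
  simp only [Pi.sub_apply, Complex.sinh, neg_mul]
  ring

theorem integral_exp_neg_sq_mul_cexp (hc : 0 < c) (k : ℂ) :
    ∫ x : ℝ, (Real.exp (-(c * x) ^ 2) : ℂ) * cexp (k * x) =
      √π / c * cexp (k ^ 2 / (4 * c ^ 2)) := by
  have hc0 : (c : ℂ) ≠ 0 := ofReal_ne_zero.2 hc.ne'
  have hdiv : (π : ℂ) / - -(c : ℂ) ^ 2 = (π / c ^ 2 : ℝ) := by push_cast; ring
  have hhalf : (1 / 2 : ℂ) = (1 / 2 : ℝ) := by push_cast; ring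
  simp_rw [ofReal_exp_neg_sq_mul_cexp]
  rw [integral_cexp_quadratic (re_neg_ofReal_sq_neg hc), hdiv, hhalf,
    ← ofReal_cpow (by positivity), ← Real.sqrt_eq_rpow, Real.sqrt_div Real.pi_pos.le,
    Real.sqrt_sq hc.le]
  push_cast
  congr 2
  field_simp
  ring

theorem integral_Ioi_exp_neg_sq_mul_cosh (hc : 0 < c) (k : ℂ) :
    ∫ x : ℝ in Set.Ioi 0, (Real.exp (-(c * x) ^ 2) : ℂ) * Complex.cosh (k * x) =
      √π / (2 * c) * cexp (k ^ 2 / (4 * c ^ 2)) := by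
  have hline := integral_exp_neg_sq_mul_cexp hc k
  rw [integral_eq_integral_Ioi_add_comp_neg (integrable_exp_neg_sq_mul_cexp hc k)] at hline
  have hcosh (x : ℝ) : (Real.exp (-(c * x) ^ 2) : ℂ) * Complex.cosh (k * x) =
      ((Real.exp (-(c * x) ^ 2) : ℂ) * cexp (k * x) +
        (Real.exp (-(c * -x) ^ 2) : ℂ) * cexp (k * (-x : ℝ))) / 2 := by
    rw [Complex.cosh, mul_neg, neg_sq]
    push_cast
    ring_nf
  simp_rw [hcosh]
  rw [integral_div, hline]
  ring

theorem exp_neg_sq_mul_cosh_sub_one (c : ℝ) (k : ℂ) (x : ℝ) :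
    (Real.exp (-(c * x) ^ 2) : ℂ) * (Complex.cosh (k * x) - 1) =
      Real.exp (-(c * x) ^ 2) * Complex.cosh (k * x) -
        Real.exp (-(c * x) ^ 2) * Complex.cosh (0 * x) := by
  rw [zero_mul, Complex.cosh_zero, mul_sub]

theorem integrable_exp_neg_sq_mul_cosh_sub_one (hc : 0 < c) (k : ℂ) :
    Integrable fun x : ℝ ↦ (Real.exp (-(c * x) ^ 2) : ℂ) * (Complex.cosh (k * x) - 1) := by
  simp_rw [exp_neg_sq_mul_cosh_sub_one]
  exact (integrable_exp_neg_sq_mul_cosh hc k).sub (integrable_exp_neg_sq_mul_cosh hc 0)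

theorem integral_Ioi_exp_neg_sq_mul_cosh_sub_one (hc : 0 < c) (k : ℂ) :
    ∫ x : ℝ in Set.Ioi 0, (Real.exp (-(c * x) ^ 2) : ℂ) * (Complex.cosh (k * x) - 1) =
      √π / (2 * c) * (cexp (k ^ 2 / (4 * c ^ 2)) - 1) := by
  simp_rw [exp_neg_sq_mul_cosh_sub_one]
  rw [integral_sub (integrable_exp_neg_sq_mul_cosh hc k).integrableOn
      (integrable_exp_neg_sq_mul_cosh hc 0).integrableOn, integral_Ioi_exp_neg_sq_mul_cosh hc,
    integral_Ioi_exp_neg_sq_mul_cosh hc, zero_pow two_ne_zero, zero_div, Complex.exp_zero,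
    mul_sub]

/- Integrate the derivative of `erfc(cx) (cosh(kx) - 1)`, which vanishes at `0` and at `∞`. -/
theorem mul_integral_Ioi_erfc_mul_sinh (hc : 0 < c) (k : ℂ) :
    k * ∫ x : ℝ in Set.Ioi 0, (erfc (c * x) : ℂ) * Complex.sinh (k * x) =
      cexp (k ^ 2 / (4 * c ^ 2)) - 1 := by
  have hcosh_sub := integrable_exp_neg_sq_mul_cosh_sub_one hc k
  have hderiv (x : ℝ) : HasDerivAt (fun x : ℝ ↦ (erfc (c * x) : ℂ) * (Complex.cosh (k * x) - 1))
      (k * (erfc (c * x) * Complex.sinh (k * x)) -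
        2 / √π * c * (Real.exp (-(c * x) ^ 2) * (Complex.cosh (k * x) - 1))) x := by
    have hcosh : HasDerivAt (fun x : ℝ ↦ Complex.cosh (k * x) - 1) (Complex.sinh (k * x) * k) x :=
      ((hasDerivAt_const_mul k).ccosh.sub_const 1).comp_ofReal
    refine ((((hasDerivAt_erfc (c * x)).comp x
      (hasDerivAt_const_mul c)).ofReal_comp).mul hcosh).congr_deriv ?_
    simp only [Function.comp_apply]
    push_cast
    ring
  have hsinh := integrableOn_erfc_mul hc.le (by fun_prop) (integrable_exp_neg_sq_mul_sinh hc k)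
  have hderiv_int := (hsinh.const_mul k).sub (hcosh_sub.integrableOn.const_mul (2 / √π * c))
  have hlim := tendsto_zero_of_hasDerivAt_of_integrableOn_Ioi (fun x _ ↦ hderiv x) hderiv_int
    (integrableOn_erfc_mul hc.le (by fun_prop) hcosh_sub)
  have hftc := integral_Ioi_of_hasDerivAt_of_tendsto' (fun x _ ↦ hderiv x) hderiv_int hlim
  rw [integral_sub (hsinh.const_mul k) (hcosh_sub.integrableOn.const_mul _), integral_const_mul,
    integral_const_mul, integral_Ioi_exp_neg_sq_mul_cosh_sub_one hc] at hftc
  have hpi : (√π : ℂ) ≠ 0 := ofReal_ne_zero.2 (Real.sqrt_ne_zero'.2 Real.pi_pos)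
  have hc0 : (c : ℂ) ≠ 0 := ofReal_ne_zero.2 hc.ne'
  simp only [ofReal_zero, mul_zero, Complex.cosh_zero, sub_self] at hftc
  rw [sub_eq_zero.1 hftc]
  field_simp

end GaussianHyperbolic

section Gstar

variable {τ : ℂ}

theorem gstar_eq_oddGauss_erfc (τ : ℂ) (x : ℝ) :
    gstar τ x = oddGauss τ (fun t ↦ (erfc (√(2 * π * τ.im) * t) : ℂ)) x / 2 := by
  rw [gstar, oddGauss]
  ring

theorem integrable_oddGauss_erfc (hτ : 0 < τ.im) :
    Integrable (oddGauss τ fun t ↦ (erfc (√(2 * π * τ.im) * t) : ℂ)) := by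
  refine (integrable_exp_neg_mul_sq (mul_pos Real.pi_pos hτ)).mono'
    (measurable_oddGauss (by fun_prop)).aestronglyMeasurable (.of_forall fun x ↦ ?_)
  calc ‖oddGauss τ (fun t ↦ (erfc (√(2 * π * τ.im) * t) : ℂ)) x‖
      ≤ Real.exp (π * τ.im * x ^ 2) * erfc (√(2 * π * τ.im) * |x|) := by
        rw [← Complex.norm_of_nonneg (erfc_nonneg (√(2 * π * τ.im) * |x|))]
        exact norm_oddGauss_le _ _ _
    _ ≤ Real.exp (π * τ.im * x ^ 2) * Real.exp (-(√(2 * π * τ.im) * |x|) ^ 2) := by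
        gcongr
        exact erfc_le_exp_neg_sq (by positivity)
    _ = Real.exp (-(π * τ.im) * x ^ 2) := by
        rw [mul_pow, Real.sq_sqrt (by positivity), sq_abs, ← Real.exp_add]
        ring_nf

theorem mul_chirpTransform_oddGauss_erfc (hτ : 0 < τ.im) (z : ℂ) :
    2 * π * I * z * chirpTransform τ (oddGauss τ fun t ↦ (erfc (√(2 * π * τ.im) * t) : ℂ)) z =
      2 * (cexp (-(π * z ^ 2 / (2 * τ.im))) - 1) := by
  have hpos : 0 < 2 * π * τ.im := by positivity
  have hexp : (2 * π * I * z) ^ 2 / (4 * (√(2 * π * τ.im) : ℂ) ^ 2) =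
      -(π * z ^ 2 / (2 * τ.im)) := by
    have hsq : (√(2 * π * τ.im) : ℂ) ^ 2 = 2 * π * τ.im := by
      rw [← ofReal_pow, Real.sq_sqrt hpos.le]
      push_cast
      ring
    have hpi : (π : ℂ) ≠ 0 := ofReal_ne_zero.2 Real.pi_ne_zero
    have him : (τ.im : ℂ) ≠ 0 := ofReal_ne_zero.2 hτ.ne'
    rw [hsq, mul_pow, mul_pow, I_sq]
    field_simp
    ring
  rw [chirpTransform_oddGauss hτ (integrable_oddGauss_erfc hτ), mul_left_comm,
    mul_integral_Ioi_erfc_mul_sinh (Real.sqrt_pos.2 hpos), hexp]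

end Gstar

section CompletedFunction

variable {τ : ℂ}

theorem gfun_eq_oddGauss (τ : ℂ) : gfun τ = oddGauss τ fun t ↦
    tentSeries τ t / (I * eta3 τ) - (erfc (√(2 * π * τ.im) * t) : ℂ) / 2 := by
  funext x
  rw [gfun, gplus_eq_oddGauss_tentSeries, gstar_eq_oddGauss_erfc]
  simp only [oddGauss]
  ring

theorem continuous_gfun (hτ : 0 < τ.im) : Continuous (gfun τ) := by
  have htent := continuous_tentSeries_abs hτ
  rw [gfun_eq_oddGauss]
  refine continuous_oddGauss (by fun_prop) ?_
  have hη : I * eta3 τ ≠ 0 := mul_ne_zero I_ne_zero (eta3_ne_zero hτ)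
  rw [tentSeries_zero hτ, mul_zero, erfc_zero, ofReal_one]
  rw [div_right_comm, div_self hη, sub_self]

theorem integrable_gplus (hτ : 0 < τ.im) : Integrable (gplus τ) := by
  simp_rw [funext (gplus_eq_oddGauss_tentSeries τ)]
  exact (integrable_oddGauss_tentSeries hτ).div_const _

theorem integrable_gstar (hτ : 0 < τ.im) : Integrable (gstar τ) := by
  simp_rw [funext (gstar_eq_oddGauss_erfc τ)]
  exact (integrable_oddGauss_erfc hτ).div_const 2

theorem integrable_gfun (hτ : 0 < τ.im) : Integrable (gfun τ) :=
  (integrable_gplus hτ).sub (integrable_gstar hτ)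

theorem sq_mul_chirpTransform_gplus (hτ : 0 < τ.im) (z : ℂ) :
    (2 * π * I * z) ^ 2 * chirpTransform τ (gplus τ) z =
      oddTheta τ z / (I * eta3 τ) - 2 * π * I * z := by
  have hη : I * eta3 τ ≠ 0 := mul_ne_zero I_ne_zero (eta3_ne_zero hτ)
  have h := sq_mul_chirpTransform_oddGauss_tentSeries hτ z
  rw [chirpTransform] at h ⊢
  simp_rw [gplus_eq_oddGauss_tentSeries, div_mul_eq_mul_div]
  rw [integral_div, ← mul_div_assoc, h, sub_div, mul_div_cancel_right₀ _ hη]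

theorem mul_chirpTransform_gstar (hτ : 0 < τ.im) (z : ℂ) :
    2 * π * I * z * chirpTransform τ (gstar τ) z = cexp (-(π * z ^ 2 / (2 * τ.im))) - 1 := by
  have h := mul_chirpTransform_oddGauss_erfc hτ z
  rw [chirpTransform] at h ⊢
  simp_rw [gstar_eq_oddGauss_erfc, div_mul_eq_mul_div]
  rw [integral_div]
  linear_combination h / 2

theorem sq_mul_chirpTransform_gfun (hτ : 0 < τ.im) (z : ℂ) :
    (2 * π * I * z) ^ 2 * chirpTransform τ (gfun τ) z =
      oddTheta τ z / (I * eta3 τ) - 2 * π * I * z * cexp (-(π * z ^ 2 / (2 * τ.im))) := by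
  have hsub : chirpTransform τ (gfun τ) z =
      chirpTransform τ (gplus τ) z - chirpTransform τ (gstar τ) z := by
    simp_rw [chirpTransform, gfun, sub_mul]
    exact integral_sub (integrable_mul_chirp hτ (integrable_gplus hτ) z)
      (integrable_mul_chirp hτ (integrable_gstar hτ) z)
  rw [hsub]
  linear_combination sq_mul_chirpTransform_gplus hτ z -
    2 * π * I * z * mul_chirpTransform_gstar hτ z

theorem cexp_neg_one_div_eq_e_mul (hτ : 0 < τ.im) (z : ℂ) :
    cexp (-(π * (-1 / τ * z) ^ 2 / (2 * (-1 / τ).im))) =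
      e (z ^ 2 / (2 * τ)) * cexp (-(π * z ^ 2 / (2 * τ.im))) := by
  have h0 := ne_zero_of_im_pos hτ
  have hv : (τ.im : ℂ) ≠ 0 := ofReal_ne_zero.2 hτ.ne'
  have hconj : (starRingEnd ℂ) τ ≠ 0 := (map_ne_zero _).2 h0
  have him : ((-1 / τ).im : ℂ) = τ.im / (τ * (starRingEnd ℂ) τ) := by
    rw [Complex.mul_conj, ← ofReal_div, neg_div, one_div, Complex.neg_im, Complex.inv_im]
    ring_nf
  have hsub : τ - (starRingEnd ℂ) τ = 2 * τ.im * I := by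
    rw [Complex.sub_conj]
    push_cast
    ring
  rw [e, ← Complex.exp_add, him]
  congr 1
  field_simp [hconj]
  linear_combination z ^ 2 * hsub

theorem chirpTransform_gfun_neg_one_div (hτ : 0 < τ.im) {z : ℂ} (hz : z ≠ 0) :
    chirpTransform (-1 / τ) (gfun (-1 / τ)) (-1 / τ * z) =
      -τ * e (z ^ 2 / (2 * τ)) * chirpTransform τ (gfun τ) z := by
  have h0 := ne_zero_of_im_pos hτ
  have hη := eta3_ne_zero hτ
  have hs := neg_I_mul_cpow_half_ne_zero h0
  have hpi : (π : ℂ) ≠ 0 := ofReal_ne_zero.2 Real.pi_ne_zero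
  have hk : (2 * π * I * (-1 / τ * z)) ^ 2 ≠ 0 := by
    simp [hpi, h0, hz]
  have htheta : oddTheta (-1 / τ) (-1 / τ * z) / (I * eta3 (-1 / τ)) =
      -(e (z ^ 2 / (2 * τ)) * (oddTheta τ z / (I * eta3 τ))) / τ := by
    rw [oddTheta_neg_one_div h0, eta3_neg_one_div hτ]
    field_simp [hs]
  refine mul_left_cancel₀ hk ?_
  rw [sq_mul_chirpTransform_gfun (im_neg_one_div_pos hτ), htheta, cexp_neg_one_div_eq_e_mul hτ]
  have h := sq_mul_chirpTransform_gfun hτ z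
  field_simp at h ⊢
  linear_combination e (z ^ 2 / (2 * τ)) * h

end CompletedFunction

section Fourier

variable {τ : ℂ} {g : ℝ → ℂ}

theorem continuous_fourierT (hg : Integrable g) : Continuous (fourierT g) := by
  refine continuous_of_dominated (bound := fun w ↦ ‖g w‖)
    (fun x ↦ hg.1.mul (Continuous.aestronglyMeasurable (by fun_prop)))
    (fun x ↦ .of_forall fun w ↦ ?_) hg.norm (.of_forall fun w ↦ by fun_prop)
  rw [norm_mul, norm_e_ofReal, mul_one]

theorem norm_fourierT_le (g : ℝ → ℂ) (x : ℝ) : ‖fourierT g x‖ ≤ ∫ w, ‖g w‖ := by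
  refine (norm_integral_le_integral_norm _).trans_eq ?_
  simp_rw [norm_mul, norm_e_ofReal, mul_one]

theorem integrable_fourierT_mul_chirp (hτ : 0 < τ.im) (hg : Integrable g) (z : ℂ) :
    Integrable fun x ↦ fourierT g x * chirp τ z x :=
  (integrable_chirp hτ z).bdd_mul (continuous_fourierT hg).aestronglyMeasurable
    (.of_forall (norm_fourierT_le g))

theorem chirp_mul_e (τ z : ℂ) (w y : ℝ) :
    chirp τ z y * e ((w * y : ℝ)) = chirp τ (z + w) y := by
  rw [chirp, chirp, ← e_add]
  push_cast
  ring_nf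

theorem e_neg_add_sq_div (τ z : ℂ) (w : ℝ) : e (-(z + w) ^ 2 / (2 * τ)) =
    e (-z ^ 2 / (2 * τ)) * chirp (-1 / τ) (-1 / τ * z) w := by
  rw [chirp, ← e_add]
  ring_nf

/- Parseval: the Fourier transform of a Gaussian of parameter `τ` has parameter `-1/τ`. -/
theorem chirpTransform_fourierT (hτ : 0 < τ.im) (hg : Integrable g) (z : ℂ) :
    chirpTransform τ (fourierT g) z = 1 / (-I * τ) ^ (1 / 2 : ℂ) * e (-z ^ 2 / (2 * τ)) *
      chirpTransform (-1 / τ) g (-1 / τ * z) := by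
  have hint : Integrable (fun p : ℝ × ℝ ↦ chirp τ z p.1 * g p.2 * e ((p.2 * p.1 : ℝ)))
      (volume.prod volume) :=
    ((integrable_chirp hτ z).mul_prod hg).mul_bdd
      (Continuous.aestronglyMeasurable (by fun_prop)) (.of_forall fun p ↦ (norm_e_ofReal _).le)
  calc chirpTransform τ (fourierT g) z
      = ∫ y, ∫ w, chirp τ z y * g w * e ((w * y : ℝ)) := by
        simp_rw [chirpTransform, fourierT, mul_comm _ (chirp τ z _), ← integral_const_mul,
          mul_assoc]
    _ = ∫ w, g w * ∫ y, chirp τ (z + w) y := by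
        rw [integral_integral_swap hint]
        simp_rw [← integral_const_mul, ← chirp_mul_e, mul_right_comm _ (g _), mul_comm (g _)]
    _ = _ := by
        simp_rw [integral_chirp hτ, e_neg_add_sq_div, chirpTransform, ← integral_const_mul]
        congr! 2
        ring

theorem fourier_mul_chirp_zero (τ : ℂ) (f : ℝ → ℂ) (ξ : ℝ) :
    𝓕 (fun x ↦ f x * chirp τ 0 x) ξ = chirpTransform τ f (-ξ) := by
  rw [Real.fourier_real_eq_integral_exp_smul, chirpTransform]
  congr! 2 with x
  rw [smul_eq_mul, mul_left_comm, chirp, chirp, e, e, ← Complex.exp_add]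
  push_cast
  ring_nf

theorem eq_of_fourier_ae_eq {V E : Type*} [NormedAddCommGroup V] [InnerProductSpace ℝ V]
    [MeasurableSpace V] [BorelSpace V] [FiniteDimensional ℝ V] [NormedAddCommGroup E]
    [NormedSpace ℂ E] [CompleteSpace E] {f g : V → E} (hf : Continuous f) (hg : Continuous g)
    (hfi : Integrable f) (hgi : Integrable g) (h : 𝓕 f =ᵐ[volume] 𝓕 g) : f = g := by
  have hsub : 𝓕 (f - g) = 𝓕 f - 𝓕 g := by
    ext ξ
    simp_rw [Pi.sub_apply, Real.fourier_eq, Pi.sub_apply, smul_sub]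
    exact integral_sub ((Real.fourierIntegral_convergent_iff ξ).2 hfi)
      ((Real.fourierIntegral_convergent_iff ξ).2 hgi)
  have hzero : 𝓕 (f - g) =ᵐ[volume] 0 := by
    rw [hsub]
    filter_upwards [h] with ξ hξ using sub_eq_zero.2 hξ
  have hinv := (hf.sub hg).fourierInv_fourier_eq (hfi.sub hgi)
    ((integrable_zero _ _ _).congr hzero.symm)
  rw [← sub_eq_zero, ← hinv]
  ext x
  rw [Real.fourierInv_eq, integral_eq_zero_of_ae]
  · rfl
  · filter_upwards [hzero] with ξ hξ
    rw [hξ]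
    exact smul_zero _

theorem eq_of_chirpTransform_eq {f : ℝ → ℂ} (hf : Continuous f) (hg : Continuous g)
    (hfi : Integrable fun x ↦ f x * chirp τ 0 x) (hgi : Integrable fun x ↦ g x * chirp τ 0 x)
    (h : ∀ ξ : ℝ, ξ ≠ 0 → chirpTransform τ f ξ = chirpTransform τ g ξ) : f = g := by
  have hae : 𝓕 (fun x ↦ f x * chirp τ 0 x) =ᵐ[volume] 𝓕 (fun x ↦ g x * chirp τ 0 x) := by
    filter_upwards [Measure.ae_ne volume (0 : ℝ)] with ξ hξ
    rw [fourier_mul_chirp_zero, fourier_mul_chirp_zero, ← ofReal_neg]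
    exact h _ (neg_ne_zero.2 hξ)
  have hmul := eq_of_fourier_ae_eq (hf.mul (continuous_chirp τ 0)) (hg.mul (continuous_chirp τ 0))
    hfi hgi hae
  exact funext fun x ↦ mul_right_cancel₀ (e_ne_zero _) (congrFun hmul x)

theorem chirpTransform_const_mul (c : ℂ) (g : ℝ → ℂ) (τ z : ℂ) :
    chirpTransform τ (fun x ↦ c * g x) z = c * chirpTransform τ g z := by
  simp_rw [chirpTransform, mul_assoc, integral_const_mul]

theorem chirpTransform_fourierT_gfun (hτ : 0 < τ.im) {z : ℂ} (hz : z ≠ 0) :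
    chirpTransform τ (fourierT (gfun (-1 / τ))) z =
      -I * (-I * τ) ^ (1 / 2 : ℂ) * chirpTransform τ (gfun τ) z := by
  have hs := neg_I_mul_cpow_half_ne_zero (ne_zero_of_im_pos hτ)
  have hsq := neg_I_mul_cpow_half_sq τ
  have he := e_neg_mul_e (z ^ 2 / (2 * τ))
  rw [chirpTransform_fourierT hτ (integrable_gfun (im_neg_one_div_pos hτ)),
    chirpTransform_gfun_neg_one_div hτ hz, neg_div]
  generalize (-I * τ) ^ (1 / 2 : ℂ) = s at hs hsq ⊢
  generalize z ^ 2 / (2 * τ) = a at he ⊢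
  field_simp
  linear_combination chirpTransform τ (gfun τ) z * (I * hsq - τ * he - τ * I_sq)

end Fourier

/-- `F(g_{-1/τ})(x) = -i·√(-iτ)·g_τ(x)`. -/
theorem gfun_fourier (τ : ℂ) (hτ : 0 < τ.im) (x : ℝ) :
    fourierT (gfun (-1/τ)) x =
      -Complex.I * ((-Complex.I * τ) ^ ((1:ℂ)/2)) * gfun τ x := by
  have hg := integrable_gfun (im_neg_one_div_pos hτ)
  have htransform : ∀ ξ : ℝ, ξ ≠ 0 → chirpTransform τ (fourierT (gfun (-1 / τ))) ξ =
      chirpTransform τ (fun y ↦ -I * (-I * τ) ^ (1 / 2 : ℂ) * gfun τ y) ξ := fun ξ hξ ↦ by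
    rw [chirpTransform_fourierT_gfun hτ (ofReal_ne_zero.2 hξ), chirpTransform_const_mul]
  have heq := eq_of_chirpTransform_eq (continuous_fourierT hg)
    (continuous_const.mul (continuous_gfun hτ)) (integrable_fourierT_mul_chirp hτ hg 0)
    (integrable_mul_chirp hτ ((integrable_gfun hτ).const_mul _) 0) htransform
  exact congrFun heq x
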